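/- Let x ∈ ℝ^m and λ ∈ ℝ^m be fixed vectors, let R = {y ∈ ℝ^m : λᵀ(y - x) ≤ 0}, let b_{ij} denote the (i,j) entry of A⁻¹, and let σ > 0. Then for every coordinate index i ∈ {1,…,m}, ∫_R λᵀ(y - x) · σ^{-3} Σ_{j=1}^m b_{ij}(y_i - x_i)(y_j - x_j) · g(y|x,σ) dy = σ^{-1} ∫_R {λᵀ(y - x) + λ_i(y_i - x_i)} · g(y|x,σ) dy. (Equation (A.4)) -/

import Mathlib

open MeasureTheory Real Matrix

/-- The density of the multivariate normal distribution with mean `x` and covariance `σ² A`. -/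
noncomputable def gaussDensity (m : ℕ) (A : Matrix (Fin m) (Fin m) ℝ)
    (x y : Fin m → ℝ) (σ : ℝ) : ℝ :=
  (2 * π * σ ^ 2) ^ (-(m : ℝ) / 2) * A.det ^ (-(1 : ℝ) / 2) *
    Real.exp (-((y - x) ⬝ᵥ (A⁻¹).mulVec (y - x)) / (2 * σ ^ 2))

/-!
Translate to `x = 0`, so that the density is a constant times `exp (-Q u)` for a positive definite
quadratic form `Q`. The factor `ℓ` vanishes on the boundary of the half-space `ℓ ≤ 0`, so
integrating by parts the product of `ℓ` and the `i`-th partial derivative of `u i * exp (-Q u)`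
leaves no boundary term. To avoid the divergence theorem on an unbounded domain, integrate by parts
on the whole space with the ramp `min (ℓ u) 0` smoothed at its kink, then let the smoothing tend to
zero.
-/

open Filter Topology Asymptotics QuadraticMap

section SoftMinZero

/-- A smoothing, for `d > 0`, of the ramp `min t 0`, which is its value at `d = 0`. The additive
constant makes it vanish at `t = 0`, so that `|softMinZero d t| ≤ |t|` for every `d ≥ 0`. -/
noncomputable def softMinZero (d t : ℝ) : ℝ := (t + d - √(t ^ 2 + d ^ 2)) / 2

variable {d t : ℝ}

lemma hasDerivAt_softMinZero (hd : d ≠ 0) (t : ℝ) :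
    HasDerivAt (softMinZero d) ((1 - t / √(t ^ 2 + d ^ 2)) / 2) t := by
  have h_sq : HasDerivAt (fun s : ℝ => s ^ 2 + d ^ 2) (2 * t) t := by
    simpa using (hasDerivAt_pow 2 t).add_const (d ^ 2)
  have h_sqrt := h_sq.sqrt (by positivity)
  rw [mul_div_mul_left _ _ two_ne_zero] at h_sqrt
  exact (((hasDerivAt_id t).add_const d).sub h_sqrt).div_const 2

lemma continuous_softMinZero (d : ℝ) : Continuous (softMinZero d) := by
  unfold softMinZero; fun_prop

lemma abs_softMinZero_le (hd : 0 ≤ d) (t : ℝ) : |softMinZero d t| ≤ |t| := by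
  have h_lower : d ≤ √(t ^ 2 + d ^ 2) := Real.le_sqrt_of_sq_le (by nlinarith)
  have h_upper : √(t ^ 2 + d ^ 2) ≤ |t| + d :=
    Real.sqrt_le_iff.mpr ⟨by positivity, by nlinarith [sq_abs t, abs_nonneg t]⟩
  unfold softMinZero
  rw [abs_le]
  constructor <;> linarith [le_abs_self t, neg_abs_le t]

lemma norm_softMinZero_smul_le {F : Type*} [SeminormedAddCommGroup F] [NormedSpace ℝ F]
    (hd : 0 ≤ d) (t : ℝ) (w : F) : ‖softMinZero d t • w‖ ≤ ‖t • w‖ := by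
  rw [norm_smul, norm_smul]
  exact mul_le_mul_of_nonneg_right (abs_softMinZero_le hd t) (norm_nonneg w)

lemma abs_deriv_softMinZero_le_one (hd : d ≠ 0) (t : ℝ) : |deriv (softMinZero d) t| ≤ 1 := by
  have h_ratio : |t / √(t ^ 2 + d ^ 2)| ≤ 1 := by
    rw [abs_div, abs_of_nonneg (Real.sqrt_nonneg _)]
    exact div_le_one_of_le₀ (Real.abs_le_sqrt (by nlinarith)) (Real.sqrt_nonneg _)
  rw [(hasDerivAt_softMinZero hd t).deriv, abs_le]
  rw [abs_le] at h_ratio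
  constructor <;> linarith

lemma tendsto_softMinZero (t : ℝ) :
    Tendsto (fun d => softMinZero d t) (𝓝[>] 0) (𝓝 (if t ≤ 0 then t else 0)) := by
  have h_cont : Continuous fun d => softMinZero d t := by unfold softMinZero; fun_prop
  refine (h_cont.tendsto' 0 _ ?_).mono_left nhdsWithin_le_nhds
  simp only [softMinZero, ne_eq, OfNat.ofNat_ne_zero, not_false_eq_true, zero_pow, add_zero,
    Real.sqrt_sq_eq_abs]
  split_ifs with ht
  · rw [abs_of_nonpos ht]; ring
  · rw [abs_of_pos (not_le.mp ht)]; ring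

lemma tendsto_deriv_softMinZero (ht : t ≠ 0) :
    Tendsto (fun d => deriv (softMinZero d) t) (𝓝[>] 0) (𝓝 (if t ≤ 0 then 1 else 0)) := by
  have h_sqrt : √(t ^ 2 + 0 ^ 2) ≠ 0 := by simpa [Real.sqrt_sq_eq_abs] using ht
  have h_cont : ContinuousAt (fun d => (1 - t / √(t ^ 2 + d ^ 2)) / 2) 0 := by
    fun_prop (disch := assumption)
  have h_zero : (1 - t / √(t ^ 2 + 0 ^ 2)) / 2 = if t ≤ 0 then 1 else 0 := by
    simp only [ne_eq, OfNat.ofNat_ne_zero, not_false_eq_true, zero_pow, add_zero,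
      Real.sqrt_sq_eq_abs]
    split_ifs with h
    · rw [abs_of_nonpos h, div_neg, div_self ht]; norm_num
    · rw [abs_of_pos (not_le.mp h), div_self ht]; norm_num
  rw [← h_zero]
  refine (h_cont.tendsto.mono_left nhdsWithin_le_nhds).congr' ?_
  filter_upwards [self_mem_nhdsWithin] with d hd
  exact (hasDerivAt_softMinZero (ne_of_gt hd) t).deriv.symm

end SoftMinZero

section HalfSpace

variable {E F : Type*} [NormedAddCommGroup E] [NormedSpace ℝ E] [MeasurableSpace E] [BorelSpace E]
  {μ : Measure E} [NormedAddCommGroup F] [NormedSpace ℝ F] {g g' : E → F} {v : E}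
  {ℓ : StrongDual ℝ E}

lemma tendsto_integral_softMinZero_smul (hg' : AEStronglyMeasurable g' μ)
    (hℓg' : Integrable (fun u => ℓ u • g' u) μ) :
    Tendsto (fun d => ∫ u, softMinZero d (ℓ u) • g' u ∂μ) (𝓝[>] 0)
      (𝓝 (∫ u in {u | ℓ u ≤ 0}, ℓ u • g' u ∂μ)) := by
  rw [← integral_indicator (measurableSet_le (by fun_prop) (by fun_prop))]
  refine tendsto_integral_filter_of_dominated_convergence (fun u => ‖ℓ u • g' u‖)
    (Eventually.of_forall fun d => ?_) ?_ hℓg'.norm (ae_of_all _ fun u => ?_)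
  · exact ((continuous_softMinZero d).comp ℓ.continuous).aestronglyMeasurable.smul hg'
  · filter_upwards [self_mem_nhdsWithin] with d hd
    exact ae_of_all _ fun u => norm_softMinZero_smul_le (le_of_lt hd) (ℓ u) (g' u)
  · simpa [Set.indicator_apply, ite_smul] using (tendsto_softMinZero (ℓ u)).smul_const (g' u)

variable [FiniteDimensional ℝ E] [μ.IsAddHaarMeasure]

lemma ae_dual_ne_zero (hℓ : ℓ ≠ 0) : ∀ᵐ u ∂μ, ℓ u ≠ 0 := by
  have h_ker : ℓ.ker ≠ ⊤ := fun h =>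
    hℓ (ContinuousLinearMap.coe_injective (LinearMap.ker_eq_top.mp h))
  simpa [ae_iff] using! Measure.addHaar_submodule μ ℓ.ker h_ker

lemma integral_softMinZero_smul_lineDeriv (hg : Integrable g μ)
    (hg' : AEStronglyMeasurable g' μ) (hℓg : Integrable (fun u => ℓ u • g u) μ)
    (hℓg' : Integrable (fun u => ℓ u • g' u) μ) (h : ∀ u, HasLineDerivAt ℝ g (g' u) u v)
    {d : ℝ} (hd : 0 < d) :
    ∫ u, softMinZero d (ℓ u) • g' u ∂μ
      = -(ℓ v • ∫ u, deriv (softMinZero d) (ℓ u) • g u ∂μ) := by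
  have h_meas : AEStronglyMeasurable (fun u => softMinZero d (ℓ u)) μ :=
    ((continuous_softMinZero d).comp ℓ.continuous).aestronglyMeasurable
  have h_deriv (u : E) : HasLineDerivAt ℝ (fun u => softMinZero d (ℓ u))
      (ℓ v * deriv (softMinZero d) (ℓ u)) u v := by
    have h_soft := (hasDerivAt_softMinZero hd.ne' (ℓ u)).differentiableAt.hasDerivAt
    simpa [mul_comm, Function.comp_def] using
      (h_soft.comp_hasFDerivAt u ℓ.hasFDerivAt).hasLineDerivAt v
  have h_bdd : Integrable (fun u => deriv (softMinZero d) (ℓ u) • g u) μ :=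
    hg.bdd_smul 1 ((measurable_deriv _).comp ℓ.continuous.measurable).aestronglyMeasurable
      (ae_of_all _ fun u => abs_deriv_softMinZero_le_one hd.ne' (ℓ u))
  have h_parts := integral_bilinear_hasLineDerivAt_right_eq_neg_left_of_integrable
    (B := ContinuousLinearMap.lsmul ℝ ℝ) (μ := μ)
    (by simpa only [ContinuousLinearMap.lsmul_apply, mul_smul] using! h_bdd.smul (ℓ v))
    (hℓg'.mono (h_meas.smul hg') (ae_of_all _ fun u => norm_softMinZero_smul_le hd.le (ℓ u) (g' u)))
    (hℓg.mono (h_meas.smul hg.1) (ae_of_all _ fun u => norm_softMinZero_smul_le hd.le (ℓ u) (g u)))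
    (fun u _ => h_deriv u) (fun u _ => h u)
  simpa only [ContinuousLinearMap.lsmul_apply, mul_smul, integral_smul] using h_parts

lemma tendsto_integral_deriv_softMinZero_smul (hg : Integrable g μ) (hℓ : ℓ ≠ 0) :
    Tendsto (fun d => ∫ u, deriv (softMinZero d) (ℓ u) • g u ∂μ) (𝓝[>] 0)
      (𝓝 (∫ u in {u | ℓ u ≤ 0}, g u ∂μ)) := by
  rw [← integral_indicator (measurableSet_le (by fun_prop) (by fun_prop))]
  refine tendsto_integral_filter_of_dominated_convergence (fun u => ‖g u‖)
    (Eventually.of_forall fun d => ?_) ?_ hg.norm ?_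
  · exact ((measurable_deriv _).comp ℓ.continuous.measurable).aestronglyMeasurable.smul hg.1
  · filter_upwards [self_mem_nhdsWithin] with d hd
    refine ae_of_all _ fun u => ?_
    rw [norm_smul]
    exact mul_le_of_le_one_left (norm_nonneg _) (abs_deriv_softMinZero_le_one (ne_of_gt hd) _)
  · filter_upwards [ae_dual_ne_zero hℓ] with u hu
    simpa [Set.indicator_apply, ite_smul] using (tendsto_deriv_softMinZero hu).smul_const (g u)

theorem setIntegral_halfSpace_smul_lineDeriv (hg : Integrable g μ)
    (hg' : AEStronglyMeasurable g' μ) (hℓg : Integrable (fun u => ℓ u • g u) μ)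
    (hℓg' : Integrable (fun u => ℓ u • g' u) μ) (h : ∀ u, HasLineDerivAt ℝ g (g' u) u v) :
    ∫ u in {u | ℓ u ≤ 0}, ℓ u • g' u ∂μ = -(ℓ v • ∫ u in {u | ℓ u ≤ 0}, g u ∂μ) := by
  rcases eq_or_ne ℓ 0 with rfl | hℓ
  · simp
  refine tendsto_nhds_unique (tendsto_integral_softMinZero_smul hg' hℓg')
    (((tendsto_integral_deriv_softMinZero_smul hg hℓ).const_smul (ℓ v)).neg.congr' ?_)
  filter_upwards [self_mem_nhdsWithin] with d hd
  exact (integral_softMinZero_smul_lineDeriv hg hg' hℓg hℓg' h hd).symm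

end HalfSpace

section GaussianWeight

lemma hasLineDerivAt_linearMap_mul_exp_neg {E : Type*} [AddCommGroup E] [Module ℝ E]
    (Q : QuadraticForm ℝ E) (α : E →ₗ[ℝ] ℝ) (u v : E) :
    HasLineDerivAt ℝ (fun u => α u * exp (-Q u))
      ((α v - α u * polar Q u v) * exp (-Q u)) u v := by
  have h_lin : HasDerivAt (fun t : ℝ => α (u + t • v)) (α v) 0 := by
    simpa using ((hasDerivAt_id (0 : ℝ)).mul_const (α v)).const_add (α u)
  have h_exp := (Q.hasLineDerivAt u v).neg.exp
  refine (h_lin.mul h_exp).congr_deriv ?_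
  simp only [Pi.neg_apply, zero_smul, add_zero]
  ring

variable {E : Type*} [NormedAddCommGroup E] [NormedSpace ℝ E] [FiniteDimensional ℝ E]
  {Q : QuadraticForm ℝ E}

lemma continuous_quadraticForm (Q : QuadraticForm ℝ E) : Continuous Q := by
  have h : Continuous fun u => LinearMap.toContinuousBilinearMap (associated Q) u u := by fun_prop
  simpa only [LinearMap.toContinuousBilinearMap_apply, associated_eq_self_apply] using h

lemma exists_pos_mul_norm_sq_le_of_posDef (hQ : Q.PosDef) :
    ∃ c > 0, ∀ u, c * ‖u‖ ^ 2 ≤ Q u := by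
  obtain ⟨c, hc, h_sphere⟩ := (isCompact_sphere (0 : E) 1).exists_forall_le' (a := 0)
    (continuous_quadraticForm Q).continuousOn fun u hu => hQ u (ne_zero_of_mem_unit_sphere ⟨u, hu⟩)
  refine ⟨c, hc, fun u => ?_⟩
  rcases eq_or_ne u 0 with rfl | hu
  · simp
  calc c * ‖u‖ ^ 2 ≤ Q (‖u‖⁻¹ • u) * ‖u‖ ^ 2 := by
        gcongr
        exact h_sphere _ (by simp [norm_smul, hu])
    _ = Q u := by
        rw [QuadraticMap.map_smul, smul_eq_mul]
        field_simp [norm_ne_zero_iff.mpr hu]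

variable [MeasurableSpace E] [BorelSpace E] {μ : Measure E} [μ.IsAddHaarMeasure]

lemma integrable_norm_pow_mul_exp_neg_mul_norm_sq {c : ℝ} (hc : 0 < c) (k : ℕ) :
    Integrable (fun u : E => ‖u‖ ^ k * exp (-c * ‖u‖ ^ 2)) μ := by
  rcases subsingleton_or_nontrivial E with _ | _
  · have : IsFiniteMeasure μ := CompactSpace.isFiniteMeasure
    exact .of_finite
  rw [integrable_fun_norm_addHaar μ (f := fun r => r ^ k * exp (-c * r ^ 2))]
  have h := integrableOn_rpow_mul_exp_neg_mul_sq hc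
    (s := ((Module.finrank ℝ E - 1 + k : ℕ) : ℝ)) (neg_one_lt_zero.trans_le (Nat.cast_nonneg _))
  simpa only [Real.rpow_natCast, pow_add, mul_assoc, smul_eq_mul] using h

lemma integrable_mul_exp_neg_of_isBigO (hQ : Q.PosDef) {f : E → ℝ}
    (hf : AEStronglyMeasurable f μ) {k : ℕ} (h : f =O[⊤] fun u => ‖u‖ ^ k) :
    Integrable (fun u => f u * exp (-Q u)) μ := by
  obtain ⟨c, hc, h_coercive⟩ := exists_pos_mul_norm_sq_le_of_posDef hQ
  obtain ⟨C, h_bound⟩ := isBigO_top.mp h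
  refine ((integrable_norm_pow_mul_exp_neg_mul_norm_sq hc k).const_mul C).mono'
    (hf.mul (continuous_quadraticForm Q).neg.rexp.aestronglyMeasurable) (ae_of_all _ fun u => ?_)
  calc ‖f u * exp (-Q u)‖ = ‖f u‖ * exp (-Q u) := by
        rw [norm_mul, Real.norm_of_nonneg (exp_nonneg _)]
    _ ≤ (C * ‖‖u‖ ^ k‖) * exp (-c * ‖u‖ ^ 2) := by
        gcongr
        · exact (norm_nonneg _).trans (h_bound u)
        · exact h_bound u
        · linarith [h_coercive u]
    _ = C * (‖u‖ ^ k * exp (-c * ‖u‖ ^ 2)) := by rw [norm_pow, norm_norm, mul_assoc]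

/-- Stein's identity on a half-space: `polar Q u v` is the derivative of `Q` at `u` along `v`, and
`ℓ u * α v + ℓ v * α u` is that of the product `ℓ * α`. -/
theorem setIntegral_halfSpace_mul_polar_mul_exp_neg (hQ : Q.PosDef) (ℓ α : StrongDual ℝ E)
    (v : E) :
    ∫ u in {u | ℓ u ≤ 0}, ℓ u * (α u * polar Q u v) * exp (-Q u) ∂μ
      = ∫ u in {u | ℓ u ≤ 0}, (ℓ u * α v + ℓ v * α u) * exp (-Q u) ∂μ := by
  let δ : StrongDual ℝ E := LinearMap.toContinuousLinearMap (Q.polarBilin.flip v)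
  have h_norm (β : StrongDual ℝ E) : β =O[⊤] fun u => ‖u‖ := (β.isBigO_id ⊤).norm_right
  have h₁ (β : StrongDual ℝ E) : Integrable (fun u => β u * exp (-Q u)) μ :=
    integrable_mul_exp_neg_of_isBigO hQ (k := 1) (by fun_prop) (by simpa using h_norm β)
  have h₂ : Integrable (fun u => ℓ u * α u * exp (-Q u)) μ :=
    integrable_mul_exp_neg_of_isBigO hQ (k := 2) (by fun_prop)
      (by simpa only [pow_two] using (h_norm ℓ).mul (h_norm α))
  have h₃ : Integrable (fun u => ℓ u * (α u * δ u) * exp (-Q u)) μ :=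
    integrable_mul_exp_neg_of_isBigO hQ (k := 3) (by fun_prop)
      (by simpa only [pow_succ', pow_zero, mul_one] using
        (h_norm ℓ).mul ((h_norm α).mul (h_norm δ)))
  have h_split (u : E) : ℓ u • ((α v - α u * δ u) * exp (-Q u))
      = α v * (ℓ u * exp (-Q u)) - ℓ u * (α u * δ u) * exp (-Q u) := by
    rw [smul_eq_mul]; ring
  have h_parts := setIntegral_halfSpace_smul_lineDeriv (ℓ := ℓ) (h₁ α)
    (g' := fun u => (α v - α u * δ u) * exp (-Q u))
    (Continuous.aestronglyMeasurable (by have := continuous_quadraticForm Q; fun_prop))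
    (by simpa only [smul_eq_mul, mul_assoc] using h₂)
    (by simpa only [h_split] using! ((h₁ ℓ).const_mul (α v)).sub h₃)
    (fun u => hasLineDerivAt_linearMap_mul_exp_neg Q α.toLinearMap u v)
  have h_sum : ∫ u in {u | ℓ u ≤ 0}, (ℓ u * α v + ℓ v * α u) * exp (-Q u) ∂μ
      = α v * ∫ u in {u | ℓ u ≤ 0}, ℓ u * exp (-Q u) ∂μ
        + ℓ v * ∫ u in {u | ℓ u ≤ 0}, α u * exp (-Q u) ∂μ := by
    rw [← integral_const_mul, ← integral_const_mul,
      ← integral_add ((h₁ ℓ).const_mul _).integrableOn ((h₁ α).const_mul _).integrableOn]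
    congr! 2 with u
    ring
  simp only [h_split] at h_parts
  rw [integral_sub ((h₁ ℓ).const_mul _).integrableOn h₃.integrableOn, integral_const_mul,
    smul_eq_mul] at h_parts
  change ∫ u in {u | ℓ u ≤ 0}, ℓ u * (α u * δ u) * exp (-Q u) ∂μ = _
  linarith

theorem setIntegral_halfSpace_sub_mul_polar_mul_exp_neg (hQ : Q.PosDef) (ℓ α : StrongDual ℝ E)
    (x v : E) :
    ∫ y in {y | ℓ (y - x) ≤ 0},
        ℓ (y - x) * (α (y - x) * polar Q (y - x) v) * exp (-Q (y - x)) ∂μ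
      = ∫ y in {y | ℓ (y - x) ≤ 0},
          (ℓ (y - x) * α v + ℓ v * α (y - x)) * exp (-Q (y - x)) ∂μ := by
  have h_translate (f : E → ℝ) :
      ∫ y in {y | ℓ (y - x) ≤ 0}, f (y - x) ∂μ = ∫ u in {u | ℓ u ≤ 0}, f u ∂μ :=
    (measurePreserving_sub_right μ x).setIntegral_preimage_emb (measurableEmbedding_subRight x) f
      {u | ℓ u ≤ 0}
  rw [h_translate fun u => ℓ u * (α u * polar Q u v) * exp (-Q u),
    h_translate fun u => (ℓ u * α v + ℓ v * α u) * exp (-Q u)]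
  exact setIntegral_halfSpace_mul_polar_mul_exp_neg hQ ℓ α v

end GaussianWeight

section GaussDensity

variable {ι : Type*} [Fintype ι] [DecidableEq ι] {A : Matrix ι ι ℝ} {σ : ℝ}

lemma polar_toQuadraticForm'_single {R : Type*} [CommRing R] {M : Matrix ι ι R} (hM : M.IsSymm)
    (u : ι → R) (i : ι) :
    polar M.toQuadraticForm' u (Pi.single i 1) = 2 * (M *ᵥ u) i := by
  have h_left : u ⬝ᵥ M *ᵥ Pi.single i 1 = (M *ᵥ u) i := by
    rw [dotProduct_mulVec, ← mulVec_transpose, hM.eq, dotProduct_single_one]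
  rw [toQuadraticForm', LinearMap.BilinMap.polar_toQuadraticMap, toLinearMap₂'_apply',
    toLinearMap₂'_apply', h_left, single_one_dotProduct, two_mul]

/-- The quadratic form `uᵀA⁻¹u / (2σ²)` whose negative is the exponent of the centred normal
density with covariance `σ² A`. -/
noncomputable def gaussExponent (A : Matrix ι ι ℝ) (σ : ℝ) : QuadraticForm ℝ (ι → ℝ) :=
  ((2 * σ ^ 2)⁻¹ • A⁻¹).toQuadraticForm'

lemma posDef_gaussExponent (hA : A.PosDef) (hσ : σ ≠ 0) : (gaussExponent A σ).PosDef :=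
  (hA.inv.smul (by positivity : 0 < (2 * σ ^ 2)⁻¹)).toQuadraticForm'

lemma polar_gaussExponent_single (hA : A.IsSymm) (u : ι → ℝ) (i : ι) :
    polar (gaussExponent A σ) u (Pi.single i 1) = (σ ^ 2)⁻¹ * ∑ j, A⁻¹ i j * u j := by
  have h_symm : ((2 * σ ^ 2)⁻¹ • A⁻¹).IsSymm := hA.inv.smul _
  rw [gaussExponent, polar_toQuadraticForm'_single h_symm, smul_mulVec, Pi.smul_apply, smul_eq_mul,
    mul_inv, mulVec, dotProduct]
  ring

lemma gaussDensity_eq (m : ℕ) (A : Matrix (Fin m) (Fin m) ℝ) (x y : Fin m → ℝ) (σ : ℝ) :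
    gaussDensity m A x y σ = (2 * π * σ ^ 2) ^ (-(m : ℝ) / 2) * A.det ^ (-(1 : ℝ) / 2) *
      exp (-gaussExponent A σ (y - x)) := by
  rw [gaussDensity, gaussExponent, toQuadraticForm', LinearMap.BilinMap.toQuadraticMap_apply,
    toLinearMap₂'_apply', smul_mulVec, dotProduct_smul, smul_eq_mul, neg_div (2 * σ ^ 2),
    div_eq_inv_mul _ (2 * σ ^ 2)]

theorem setIntegral_halfSpace_mul_polar_mul_gaussDensity {m : ℕ} {A : Matrix (Fin m) (Fin m) ℝ}
    (hA : A.PosDef) (hσ : σ ≠ 0) (x lam : Fin m → ℝ) (i : Fin m) :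
    ∫ y in {y : Fin m → ℝ | lam ⬝ᵥ (y - x) ≤ 0}, lam ⬝ᵥ (y - x) *
        ((y i - x i) * polar (gaussExponent A σ) (y - x) (Pi.single i 1)) * gaussDensity m A x y σ
      = ∫ y in {y : Fin m → ℝ | lam ⬝ᵥ (y - x) ≤ 0},
          (lam ⬝ᵥ (y - x) + lam i * (y i - x i)) * gaussDensity m A x y σ := by
  have h_stein := setIntegral_halfSpace_sub_mul_polar_mul_exp_neg (μ := volume)
    (posDef_gaussExponent hA hσ) (LinearMap.toContinuousLinearMap (dotProductBilin ℝ ℝ lam))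
    (ContinuousLinearMap.proj i) x (Pi.single i 1)
  simp only [LinearMap.coe_toContinuousLinearMap', dotProductBilin_apply_apply,
    ContinuousLinearMap.proj_apply, Pi.sub_apply, Pi.single_eq_same, mul_one,
    dotProduct_single_one] at h_stein
  simp only [gaussDensity_eq, mul_left_comm _ (_ * A.det ^ (-(1 : ℝ) / 2)), integral_const_mul,
    h_stein]

end GaussDensity

/-- Equation (A.4): for fixed `x, λ ∈ ℝᵐ`, the half-space `R = {y : λᵀ(y-x) ≤ 0}`,
`b_{ij}` the `(i,j)` entry of `A⁻¹`, `σ > 0` and any coordinate `i`,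
`∫_R λᵀ(y-x) σ⁻³ Σ_j b_{ij}(y_i-x_i)(y_j-x_j) g(y|x,σ) dy
  = σ⁻¹ ∫_R {λᵀ(y-x) + λ_i(y_i-x_i)} g(y|x,σ) dy`. -/
theorem eqn_A4 (m : ℕ) (A : Matrix (Fin m) (Fin m) ℝ) (hA : A.PosDef)
    (x lam : Fin m → ℝ) (σ : ℝ) (hσ : 0 < σ) (i : Fin m) :
    ∫ y in {y : Fin m → ℝ | lam ⬝ᵥ (y - x) ≤ 0},
        (lam ⬝ᵥ (y - x)) *
          (σ ^ (-3 : ℤ) * ∑ j : Fin m, A⁻¹ i j * (y i - x i) * (y j - x j)) *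
          gaussDensity m A x y σ
      = σ⁻¹ * ∫ y in {y : Fin m → ℝ | lam ⬝ᵥ (y - x) ≤ 0},
          ((lam ⬝ᵥ (y - x)) + lam i * (y i - x i)) * gaussDensity m A x y σ := by
  have h_polar (y : Fin m → ℝ) :
      σ ^ (-3 : ℤ) * ∑ j, A⁻¹ i j * (y i - x i) * (y j - x j)
        = σ⁻¹ * ((y i - x i) * polar (gaussExponent A σ) (y - x) (Pi.single i 1)) := by
    have h_pow : σ ^ (-3 : ℤ) = σ⁻¹ * (σ ^ 2)⁻¹ := by
      rw [← mul_inv, ← pow_succ']; rfl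
    have h_sum : ∑ j, A⁻¹ i j * (y i - x i) * (y j - x j)
        = (y i - x i) * ∑ j, A⁻¹ i j * (y - x) j := by
      rw [Finset.mul_sum]
      exact Finset.sum_congr rfl fun j _ => by rw [Pi.sub_apply]; ring
    rw [polar_gaussExponent_single (isHermitian_iff_isSymm.mp hA.isHermitian), h_pow, h_sum]
    ring
  simp only [h_polar, mul_left_comm _ σ⁻¹, mul_assoc σ⁻¹, integral_const_mul,
    setIntegral_halfSpace_mul_polar_mul_gaussDensity hA hσ.ne']
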